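/- Let S be a set without tangents of size 10 in PG(2,5). Then either S is the trivial set without tangents (there exist two distinct lines L1, L2 of PG(2,5) such that S is the set of all points on L1 or L2 different from L1 ∩ L2), or S is the set of interior points of some irreducible conic of PG(2,5). -/

import Mathlib

/-!
`PG(2,F)`: points are the 1-dimensional subspaces of `F^3` (modelled as the
projectivization of `Fin 3 → F`), lines are the 2-dimensional subspaces.
-/

variable {F : Type*} [Field F]

/-- The points of `PG(2,F)`: 1-dimensional subspaces of `F^3`. -/
abbrev PGPoint (F : Type*) [Field F] := Projectivization F (Fin 3 → F)

/-- A line of `PG(2,F)` is a 2-dimensional subspace of `F^3`. -/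
def IsProjLine (F : Type*) [Field F] (L : Submodule F (Fin 3 → F)) : Prop :=
  Module.finrank F L = 2

/-- The set of projective points lying on the subspace `L`. -/
def pointsOn (L : Submodule F (Fin 3 → F)) : Set (PGPoint F) :=
  {P | P.submodule ≤ L}

/-- `S` is a set without tangents: no line of `PG(2,F)` meets `S` in exactly one point. -/
def NoTangents (S : Set (PGPoint F)) : Prop :=
  ∀ L : Submodule F (Fin 3 → F), IsProjLine F L →
    ¬ (∃! P : PGPoint F, P ∈ S ∩ pointsOn L)

/-- The trivial set without tangents: all points on one of two distinct lines,
different from their intersection point. -/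
def IsTrivialSWT (S : Set (PGPoint F)) : Prop :=
  ∃ L1 L2 : Submodule F (Fin 3 → F), IsProjLine F L1 ∧ IsProjLine F L2 ∧ L1 ≠ L2 ∧
    S = (pointsOn L1 ∪ pointsOn L2) \ (pointsOn L1 ∩ pointsOn L2)

/-- The conic (zero set in `PG(2,F)`) of a quadratic form `Q` on `F^3`. -/
def conicSet (Q : QuadraticForm F (Fin 3 → F)) : Set (PGPoint F) :=
  {P | ∀ v ∈ P.submodule, Q v = 0}

/-- Nondegeneracy of a quadratic form (via its polar form). -/
def NondegQF (Q : QuadraticForm F (Fin 3 → F)) : Prop :=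
  ∀ v : Fin 3 → F, (∀ w, QuadraticMap.polar Q v w = 0) → v = 0

/-- A tangent line of a point set `C`: a line meeting `C` in exactly one point. -/
def IsTangentLine (C : Set (PGPoint F)) (L : Submodule F (Fin 3 → F)) : Prop :=
  IsProjLine F L ∧ ∃! P : PGPoint F, P ∈ C ∩ pointsOn L

/-- An external line of a point set `C`: a line meeting `C` in no point. -/
def IsExternalLine (C : Set (PGPoint F)) (L : Submodule F (Fin 3 → F)) : Prop :=
  IsProjLine F L ∧ C ∩ pointsOn L = ∅

/-- An exterior point of `C`: a point not on `C` lying on some tangent line of `C`. -/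
def IsExteriorPoint (C : Set (PGPoint F)) (P : PGPoint F) : Prop :=
  P ∉ C ∧ ∃ L : Submodule F (Fin 3 → F), IsTangentLine C L ∧ P ∈ pointsOn L

/-- An interior point of `C`: a point neither on `C` nor exterior to `C`. -/
def IsInteriorPoint (C : Set (PGPoint F)) (P : PGPoint F) : Prop :=
  P ∉ C ∧ ¬ IsExteriorPoint C P

/-- An exterior set of `C`: every line containing at least two of its points is
an external line of `C`. -/
def IsExteriorSet (C E : Set (PGPoint F)) : Prop :=
  ∀ L : Submodule F (Fin 3 → F), IsProjLine F L →
    (∃ P1 ∈ E ∩ pointsOn L, ∃ P2 ∈ E ∩ pointsOn L, P1 ≠ P2) → IsExternalLine C L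

section NoTangentsCombinatorics

open Finset Configuration Configuration.ProjectivePlane
open scoped Classical

theorem Finset.sum_sum_filter_of_existsUnique {α β M : Type*} [AddCommMonoid M]
    {r : α → β → Prop} {s : Finset α} {t : Finset β}
    (h : ∀ b ∈ t, ∃! a, a ∈ s ∧ r a b) (f : β → M) :
    ∑ a ∈ s, ∑ b ∈ t with r a b, f b = ∑ b ∈ t, f b := by
  simp_rw [Finset.sum_filter]
  rw [Finset.sum_comm]
  refine Finset.sum_congr rfl fun b hb => ?_
  obtain ⟨a, ⟨has, hab⟩, hu⟩ := h b hb
  rw [Finset.sum_eq_single_of_mem a has, if_pos hab]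
  exact fun c hc hca => if_neg fun hcb => hca (hu c ⟨hc, hcb⟩)

theorem Finset.sum_comp_eq_sum_range {α M : Type*} [AddCommMonoid M] {k : ℕ} {A : Finset α}
    {n : α → ℕ} (h : ∀ a ∈ A, n a < k) (g : ℕ → M) :
    ∑ a ∈ A, g (n a) = ∑ i ∈ range k, #{a ∈ A | n a = i} • g i := by
  rw [← Finset.sum_fiberwise_of_maps_to (t := range k) (g := n) fun a ha => mem_range.2 (h a ha)]
  refine Finset.sum_congr rfl fun i _ => ?_
  rw [Finset.sum_congr rfl fun a ha => by rw [(mem_filter.1 ha).2], Finset.sum_const]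

variable {P L : Type*} [Membership P L]

/-- The number of points of `S` on the line `l`. -/
noncomputable def secantCard (S : Finset P) (l : L) : ℕ := #{p ∈ S | p ∈ l}

theorem secantCard_eq_add_one {S : Finset P} {p : P} {l : L} (hp : p ∈ S) (hl : p ∈ l) :
    secantCard S l = secantCard (S.erase p) l + 1 := by
  rw [secantCard, secantCard, filter_erase, card_erase_add_one (by simp [hp, hl])]

theorem two_le_secantCard {S : Finset P} (hS : ∀ l : L, secantCard S l ≠ 1) {p : P} {l : L}
    (hp : p ∈ S) (hl : p ∈ l) : 2 ≤ secantCard S l := by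
  have := hS l
  have := secantCard_eq_add_one hp hl
  omega

theorem sum_secantCard_mul [Fintype L] (S : Finset P) (g : L → ℕ) :
    ∑ p ∈ S, ∑ l : L with p ∈ l, g l = ∑ l : L, secantCard S l * g l := by
  simp_rw [Finset.sum_filter]
  rw [Finset.sum_comm]
  refine Finset.sum_congr rfl fun l _ => ?_
  rw [← Finset.sum_filter, Finset.sum_const, secantCard, smul_eq_mul]

variable [ProjectivePlane P L] [Fintype L]

theorem sum_pencil_secantCard {T : Finset P} {p : P} (hp : p ∉ T) :
    ∑ l : L with p ∈ l, secantCard T l = #T := by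
  have := Finset.sum_sum_filter_of_existsUnique (s := {l : L | p ∈ l}) (t := T)
    (r := fun l q => q ∈ l) (fun q hq => by
      simpa using HasLines.existsUnique_line P L p q (by rintro rfl; exact hp hq)) fun _ => 1
  simpa [secantCard] using this

variable [Fintype P]

theorem card_pencil (p : P) : #{l : L | p ∈ l} = order P L + 1 := by
  rw [← lineCount_eq L p, lineCount, Nat.card_eq_fintype_card, Fintype.card_subtype]

theorem card_line (l : L) : #{p : P | p ∈ l} = order P L + 1 := by
  rw [← pointCount_eq P l, pointCount, Nat.card_eq_fintype_card, Fintype.card_subtype]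

theorem sum_pencil_excess {S : Finset P} (hS : ∀ l : L, secantCard S l ≠ 1) (hcard : #S = 10)
    (ho : order P L = 5) {p : P} (hp : p ∈ S) :
    ∑ l : L with p ∈ l, (secantCard S l - 2) = 3 := by
  have h1 : ∑ l : L with p ∈ l, secantCard (S.erase p) l = 9 := by
    rw [sum_pencil_secantCard (by simp), card_erase_of_mem hp, hcard]
  have h2 : ∑ l : L with p ∈ l, secantCard (S.erase p) l
      = ∑ l : L with p ∈ l, ((secantCard S l - 2) + 1) := by
    refine Finset.sum_congr rfl fun l hl => ?_
    have hl : p ∈ l := by simpa using hl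
    have := two_le_secantCard hS hp hl
    have := secantCard_eq_add_one hp hl
    omega
  rw [h1, Finset.sum_add_distrib, Finset.sum_const, card_pencil, ho, smul_eq_mul] at h2
  omega

theorem secantCard_le_five {S : Finset P} (hS : ∀ l : L, secantCard S l ≠ 1) (hcard : #S = 10)
    (ho : order P L = 5) (l : L) : secantCard S l ≤ 5 := by
  by_contra! h
  obtain ⟨p, hp⟩ : {p ∈ S | p ∈ l}.Nonempty := card_pos.1 (by rw [secantCard] at h; omega)
  rw [mem_filter] at hp
  have h3 := sum_pencil_excess hS hcard ho hp.1
  have := Finset.single_le_sum (f := fun l : L => secantCard S l - 2) (fun _ _ => Nat.zero_le _)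
    (show l ∈ ({l : L | p ∈ l} : Finset L) by simpa using hp.2)
  omega

theorem secantCard_add_le_seven {S : Finset P} (hS : ∀ l : L, secantCard S l ≠ 1)
    (hcard : #S = 10) (ho : order P L = 5) {p : P} (hp : p ∈ S) {l m : L} (hlm : l ≠ m)
    (hl : p ∈ l) (hm : p ∈ m) : secantCard S l + secantCard S m ≤ 7 := by
  have h3 := sum_pencil_excess hS hcard ho hp
  have := Finset.sum_le_sum_of_subset (f := fun l : L => secantCard S l - 2)
    (show ({l, m} : Finset L) ⊆ ({l : L | p ∈ l} : Finset L) by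
      intro k; simp only [mem_insert, mem_singleton, mem_filter_univ]; rintro (rfl | rfl) <;> assumption)
  rw [sum_pair hlm] at this
  omega

theorem card_line_sdiff (S : Finset P) (ho : order P L = 5) (l : L) :
    #{p : P | p ∈ l ∧ p ∉ S} + secantCard S l = 6 := by
  have h := card_line (P := P) l
  rw [ho, ← card_filter_add_card_filter_not (p := (· ∉ S)), filter_filter, filter_filter] at h
  rw [secantCard, show 6 = 5 + 1 from rfl, ← h]
  congr 2
  ext p
  simp [and_comm]

theorem eq_xor_of_five_le_secantCard {S : Finset P} (hS : ∀ l : L, secantCard S l ≠ 1)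
    (hcard : #S = 10) (ho : order P L = 5) {l : L} (hl : 5 ≤ secantCard S l) :
    ∃ m : L, l ≠ m ∧ ∀ p, p ∈ S ↔ ((p ∈ l ∨ p ∈ m) ∧ ¬ (p ∈ l ∧ p ∈ m)) := by
  have hl5 : secantCard S l = 5 := le_antisymm (secantCard_le_five hS hcard ho l) hl
  obtain ⟨R, hR⟩ := card_eq_one.1 (show #{p : P | p ∈ l ∧ p ∉ S} = 1 by
    have := card_line_sdiff S ho l; omega)
  have hR' : ∀ p : P, p ∈ l → p ∉ S → p = R := fun p h1 h2 => by
    have : p ∈ ({p : P | p ∈ l ∧ p ∉ S} : Finset P) := by simp [h1, h2]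
    simpa [hR] using this
  obtain ⟨hRl, hRS⟩ : R ∈ l ∧ R ∉ S := by
    have : R ∈ ({p : P | p ∈ l ∧ p ∉ S} : Finset P) := by simp [hR]
    simpa using this
  have hT : #{p ∈ S | p ∉ l} = 5 := by
    have := card_filter_add_card_filter_not (s := S) (p := (· ∈ l))
    rw [secantCard] at hl5
    omega
  obtain ⟨t₁, ht₁⟩ : {p ∈ S | p ∉ l}.Nonempty := card_pos.1 (by omega)
  obtain ⟨ht₁S, ht₁l⟩ := mem_filter.1 ht₁
  obtain ⟨m, ⟨ht₁m, hRm⟩, hmu⟩ := HasLines.existsUnique_line P L t₁ R (by rintro rfl; exact hRS ht₁S)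
  have hlm : l ≠ m := by rintro rfl; exact ht₁l ht₁m
  have hTm : ∀ t ∈ S, t ∉ l → t ∈ m := by
    intro t htS htl
    by_cases htt : t = t₁
    · rwa [htt]
    obtain ⟨k, ⟨htk, ht₁k⟩, -⟩ := HasLines.existsUnique_line P L t t₁ htt
    have hlk : l ≠ k := by rintro rfl; exact htl htk
    obtain ⟨x, ⟨hxl, hxk⟩, -⟩ := HasPoints.existsUnique_point P L l k hlk
    by_cases hxS : x ∈ S
    · have h7 := secantCard_add_le_seven hS hcard ho hxS hlk hxl hxk
      have h3 : #{x, t, t₁} ≤ secantCard S k := by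
        refine card_le_card fun y hy => ?_
        simp only [mem_insert, mem_singleton] at hy
        rw [mem_filter]
        rcases hy with rfl | rfl | rfl <;> exact ⟨by assumption, by assumption⟩
      rw [card_eq_three.2 ⟨x, t, t₁, by rintro rfl; exact htl hxl, by rintro rfl; exact ht₁l hxl,
        htt, rfl⟩] at h3
      omega
    · obtain rfl := hR' x hxl hxS
      rwa [← hmu k ⟨ht₁k, hxk⟩]
  have hinter : ∀ p : P, p ∈ l → p ∈ m → p = R := fun p h1 h2 =>
    (Nondegenerate.eq_or_eq h1 hRl h2 hRm).resolve_right hlm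
  have hTeq : ({p ∈ S | p ∉ l} : Finset P) = ({p : P | p ∈ m} : Finset P).erase R := by
    refine eq_of_subset_of_card_le (fun t ht => ?_) ?_
    · obtain ⟨h1, h2⟩ := mem_filter.1 ht
      rw [mem_erase, mem_filter_univ]
      exact ⟨by rintro rfl; exact h2 hRl, hTm t h1 h2⟩
    · rw [card_erase_of_mem (by simpa using hRm), card_line, hT, ho]
  refine ⟨m, hlm, fun p => ⟨fun hp => ?_, ?_⟩⟩
  · by_cases hpl : p ∈ l
    · exact ⟨.inl hpl, fun h => hRS (hinter p h.1 h.2 ▸ hp)⟩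
    · exact ⟨.inr (hTm p hp hpl), fun h => hpl h.1⟩
  · rintro ⟨h | h, hn⟩
    · by_contra hpS
      obtain rfl := hR' p h hpS
      exact hn ⟨hRl, hRm⟩
    · have : p ∈ ({p ∈ S | p ∉ l} : Finset P) := by
        rw [hTeq, mem_erase, mem_filter_univ]
        exact ⟨by rintro rfl; exact hn ⟨hRl, hRm⟩, h⟩
      exact (mem_filter.1 this).1

theorem secantCard_ne_four {S : Finset P} (hS : ∀ l : L, secantCard S l ≠ 1)
    (hcard : #S = 10) (ho : order P L = 5) (hle : ∀ l : L, secantCard S l ≤ 4) (l : L) :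
    secantCard S l ≠ 4 := by
  intro hl
  set T : Finset P := {p ∈ S | p ∉ l} with hTdef
  have hT : #T = 6 := by
    have := card_filter_add_card_filter_not (s := S) (p := (· ∈ l))
    rw [secantCard] at hl
    rw [hTdef]
    omega
  have hsplit : ∀ m : L, secantCard S m = #{p ∈ S | p ∈ l ∧ p ∈ m} + secantCard T m := fun m => by
    rw [secantCard, secantCard, hTdef, ← card_filter_add_card_filter_not (p := (· ∈ l)),
      filter_filter, filter_filter, filter_filter]
    simp only [and_comm]
  set G : L → ℕ := fun m => secantCard T m * (secantCard S m - 2) with hG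
  have htotal : ∑ m : L, G m = 18 := by
    rw [← sum_secantCard_mul, Finset.sum_congr rfl fun p hp =>
      sum_pencil_excess hS hcard ho (mem_filter.1 hp).1]
    rw [Finset.sum_const, hT, smul_eq_mul]
  have hGl : G l = 0 := by
    have : secantCard T l = 0 := by simp [secantCard, hTdef]
    simp [hG, this]
  have hsum : ∑ p : P with p ∈ l, ∑ m ∈ univ.erase l with p ∈ m, G m = 18 := by
    rw [Finset.sum_sum_filter_of_existsUnique (r := fun (p : P) (m : L) => p ∈ m) fun m hm => by
      simpa using HasPoints.existsUnique_point P L l m (ne_of_mem_erase hm).symm, ← htotal,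
      ← Finset.add_sum_erase univ G (mem_univ l), hGl, zero_add]
  have hpencil : ∀ p : P, ({m ∈ univ.erase l | p ∈ m} : Finset L) = ({m : L | p ∈ m} : Finset L).erase l :=
    fun p => filter_erase ..
  have hinS : ∀ p ∈ S, p ∈ l → ∑ m ∈ univ.erase l with p ∈ m, G m = 2 := by
    intro p hp hpl
    have h3 := sum_pencil_excess hS hcard ho hp
    rw [← Finset.add_sum_erase _ _ (show l ∈ ({m : L | p ∈ m} : Finset L) by simpa using hpl), hl,
      ← hpencil] at h3
    have h1 : ∑ m ∈ univ.erase l with p ∈ m, (secantCard S m - 2) = 1 := by omega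
    rw [show 2 = 2 * 1 from rfl, ← h1, Finset.mul_sum]
    refine Finset.sum_congr rfl fun m hm => ?_
    have hle1 := Finset.single_le_sum (f := fun m : L => secantCard S m - 2)
      (fun _ _ => Nat.zero_le _) hm
    rw [h1] at hle1
    simp only [mem_filter, mem_erase, mem_univ, and_true] at hm
    have h2 := two_le_secantCard hS hp hm.2
    have hone : #{q ∈ S | q ∈ l ∧ q ∈ m} = 1 := by
      refine card_eq_one.2 ⟨p, ?_⟩
      ext q
      simp only [mem_filter, mem_singleton]
      constructor
      · exact fun h => (Nondegenerate.eq_or_eq h.2.1 hpl h.2.2 hm.2).resolve_right hm.1.symm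
      · rintro rfl; exact ⟨hp, hpl, hm.2⟩
    have := hsplit m
    simp only [hG]
    obtain h | h : secantCard S m = 2 ∨ secantCard S m = 3 := by omega
    · simp [h]
    · rw [h] at this ⊢
      omega
  have hnotS : ∀ p ∉ S, p ∈ l → ∑ m ∈ univ.erase l with p ∈ m, G m ∈ ({0, 6, 8} : Finset ℕ) := by
    intro p hp hpl
    have h10 := sum_pencil_secantCard (L := L) hp
    rw [hcard, ← Finset.add_sum_erase _ _ (show l ∈ ({m : L | p ∈ m} : Finset L) by simpa using hpl), hl,
      ← hpencil] at h10
    have hGm : ∑ m ∈ univ.erase l with p ∈ m, G m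
        = ∑ m ∈ univ.erase l with p ∈ m, (fun n => n * (n - 2)) (secantCard S m) := by
      refine Finset.sum_congr rfl fun m hm => ?_
      simp only [mem_filter, mem_erase, mem_univ, and_true] at hm
      have h0 : #{q ∈ S | q ∈ l ∧ q ∈ m} = 0 := by
        rw [card_eq_zero, filter_eq_empty_iff]
        rintro q hq ⟨h1, h2⟩
        obtain rfl := (Nondegenerate.eq_or_eq h1 hpl h2 hm.2).resolve_right hm.1.symm
        exact hp hq
      have := hsplit m
      rw [h0, zero_add] at this
      simp only [hG, this]
    rw [hGm]
    rw [Finset.sum_comp_eq_sum_range (k := 5) (n := secantCard S) (g := fun n => n)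
      fun m _ => Nat.lt_succ_of_le (hle m)] at h10
    rw [Finset.sum_comp_eq_sum_range (k := 5) (n := secantCard S) (g := fun n => n * (n - 2))
      fun m _ => Nat.lt_succ_of_le (hle m)]
    have h1 : #{m ∈ ({m ∈ univ.erase l | p ∈ m} : Finset L) | secantCard S m = 1} = 0 := by
      rw [card_eq_zero, filter_eq_empty_iff]
      exact fun m _ => hS m
    simp only [Finset.sum_range_succ, Finset.sum_range_zero, smul_eq_mul, h1] at h10 ⊢
    simp only [mem_insert, mem_singleton]
    omega
  have hR := card_line_sdiff S ho l
  obtain ⟨R₁, R₂, hne, hR12⟩ := card_eq_two.1 (show #{p : P | p ∈ l ∧ p ∉ S} = 2 by omega)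
  rw [← Finset.sum_filter_add_sum_filter_not _ (· ∈ S), filter_filter, filter_filter, hR12,
    sum_pair hne, Finset.sum_congr rfl fun p hp => hinS p (mem_filter.1 hp).2.2 (mem_filter.1 hp).2.1,
    Finset.sum_const] at hsum
  have h4 : #{p : P | p ∈ l ∧ p ∈ S} = 4 := by
    rw [← hl, secantCard]
    congr 1
    ext p
    simp [and_comm]
  have hmem : ∀ R ∈ ({R₁, R₂} : Finset P), R ∈ l ∧ R ∉ S := fun R hR => by
    rw [← hR12] at hR
    simpa using hR
  have hR₁ := hmem R₁ (by simp)
  have hR₂ := hmem R₂ (by simp)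
  have e₁ := hnotS R₁ hR₁.2 hR₁.1
  have e₂ := hnotS R₂ hR₂.2 hR₂.1
  simp only [mem_insert, mem_singleton] at e₁ e₂
  rw [h4, smul_eq_mul] at hsum
  omega

theorem card_external_pencil {S : Finset P} (hS : ∀ l : L, secantCard S l ≠ 1)
    (hcard : #S = 10) (ho : order P L = 5) (hle : ∀ l : L, secantCard S l ≤ 3) {p : P}
    (hp : p ∉ S) : #{l ∈ ({l : L | p ∈ l} : Finset L) | secantCard S l = 0} = 1 ∨
      #{l ∈ ({l : L | p ∈ l} : Finset L) | secantCard S l = 0} = 2 := by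
  have h10 := sum_pencil_secantCard (L := L) hp
  have h6 := card_pencil (L := L) p
  rw [Finset.sum_comp_eq_sum_range (k := 4) (n := secantCard S) (g := fun n => n)
      fun m _ => Nat.lt_succ_of_le (hle m)] at h10
  rw [card_eq_sum_ones, Finset.sum_comp_eq_sum_range (k := 4) (n := secantCard S) (g := fun _ => 1)
      fun m _ => Nat.lt_succ_of_le (hle m)] at h6
  have h1 : #{m ∈ ({m : L | p ∈ m} : Finset L) | secantCard S m = 1} = 0 := by
    rw [card_eq_zero, filter_eq_empty_iff]
    exact fun m _ => hS m
  simp only [Finset.sum_range_succ, Finset.sum_range_zero, smul_eq_mul, h1] at h10 h6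
  omega

theorem card_external {S : Finset P} (hS : ∀ l : L, secantCard S l ≠ 1)
    (hcard : #S = 10) (ho : order P L = 5) (hle : ∀ l : L, secantCard S l ≤ 3) :
    #{l : L | secantCard S l = 0} = 6 := by
  have h31 : ∑ l : L, 1 = 31 := by
    rw [← card_eq_sum_ones, card_univ, card_lines P L, ho]; rfl
  have h60 := sum_secantCard_mul (L := L) S fun _ => 1
  have h30 := sum_secantCard_mul (L := L) S fun l => secantCard S l - 2
  rw [Finset.sum_congr rfl fun p hp => sum_pencil_excess hS hcard ho hp] at h30
  rw [Finset.sum_comp_eq_sum_range (k := 4) (n := secantCard S) (g := fun n => n * (n - 2))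
      fun m _ => Nat.lt_succ_of_le (hle m)] at h30
  rw [Finset.sum_comp_eq_sum_range (k := 4) (n := secantCard S) (g := fun n => n * 1)
      fun m _ => Nat.lt_succ_of_le (hle m)] at h60
  rw [Finset.sum_comp_eq_sum_range (k := 4) (n := secantCard S) (g := fun _ => 1)
      fun m _ => Nat.lt_succ_of_le (hle m)] at h31
  have h1 : #{m : L | secantCard S m = 1} = 0 := by
    rw [card_eq_zero, filter_eq_empty_iff]
    exact fun m _ => hS m
  simp only [Finset.sum_range_succ, Finset.sum_range_zero, smul_eq_mul, h1,
    card_pencil, ho, Finset.sum_const, hcard] at h30 h60 h31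
  omega

end NoTangentsCombinatorics

section ConicCoordinates

/-- No three of the lines `x = 0`, `y = 0`, `z = 0`, `x + y + z = 0`, `x + b y + c z = 0`
and `x + d y + e z = 0` are concurrent. -/
def IsNormalizedArc {R : Type*} [CommRing R] (b c d e : R) : Prop :=
  (b ≠ 0 ∧ c ≠ 0 ∧ d ≠ 0 ∧ e ≠ 0) ∧ (b ≠ 1 ∧ c ≠ 1 ∧ b ≠ c) ∧ (d ≠ 1 ∧ e ≠ 1 ∧ d ≠ e) ∧
    b ≠ d ∧ c ≠ e ∧ c * d ≠ b * e ∧ (b - 1) * (e - 1) ≠ (c - 1) * (d - 1)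

/-- The equation of the conic tangent to `x = 0`, `y = 0`, `z = 0` with parameters `α`, `β`, `γ`. -/
def inscribedConic {R : Type*} [CommRing R] (α β γ x y z : R) : R :=
  (α * x) * (α * x) + (β * y) * (β * y) + (γ * z) * (γ * z)
    - 2 * ((α * x) * (β * y) + (β * y) * (γ * z) + (α * x) * (γ * z))

/-- The polar form of `inscribedConic`. -/
def inscribedConicPolar {R : Type*} [CommRing R] (α β γ x y z u v w : R) : R :=
  2 * ((α * x) * (α * u - β * v - γ * w) + (β * y) * (β * v - α * u - γ * w)
    + (γ * z) * (γ * w - α * u - β * v))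

/-- The conic with parameters `α`, `β`, `γ` is nondegenerate, and a point is on none of its tangents
exactly if it is on none of six given lines. -/
def HasTangents {R : Type*} [CommRing R] (b c d e α β γ : R) : Prop :=
  (∀ x y z : R, (∀ u v w : R, inscribedConicPolar α β γ x y z u v w = 0) →
    x = 0 ∧ y = 0 ∧ z = 0) ∧
  ∀ u v w : R, (∀ x y z : R, ¬ (x = 0 ∧ y = 0 ∧ z = 0) → inscribedConic α β γ x y z = 0 →
      inscribedConicPolar α β γ x y z u v w ≠ 0) ↔
    (u ≠ 0 ∧ v ≠ 0 ∧ w ≠ 0 ∧ u + v + w ≠ 0 ∧ u + b * v + c * w ≠ 0 ∧ u + d * v + e * w ≠ 0)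

instance {R : Type*} [CommRing R] [DecidableEq R] (b c d e : R) :
    Decidable (IsNormalizedArc b c d e) := by unfold IsNormalizedArc; infer_instance

instance {R : Type*} [CommRing R] [DecidableEq R] [Fintype R] (b c d e α β γ : R) :
    Decidable (HasTangents b c d e α β γ) := by unfold HasTangents; infer_instance

theorem exists_hasTangents_zmod : ∀ b c d e : ZMod 5, IsNormalizedArc b c d e →
    ∃ α β γ : ZMod 5, HasTangents b c d e α β γ := by
  have h : ∀ b c d e : ZMod 5, IsNormalizedArc b c d e →
      ∃ p ∈ [((1 : ZMod 5), (1 : ZMod 5), (3 : ZMod 5)), (1, 3, 1), (1, 2, 2)],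
        HasTangents b c d e p.1 p.2.1 p.2.2 := by
    decide +kernel
  intro b c d e hb
  obtain ⟨p, -, hp⟩ := h b c d e hb
  exact ⟨_, _, _, hp⟩

theorem IsNormalizedArc.map {R R' : Type*} [CommRing R] [CommRing R'] (f : R ≃+* R') {b c d e : R}
    (h : IsNormalizedArc b c d e) : IsNormalizedArc (f b) (f c) (f d) (f e) := by
  simpa [IsNormalizedArc, ← map_mul, ← map_sub, ← map_one f, -map_one] using h

theorem HasTangents.map {R R' : Type*} [CommRing R] [CommRing R'] (f : R ≃+* R')
    {b c d e α β γ : R} (h : HasTangents b c d e α β γ) :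
    HasTangents (f b) (f c) (f d) (f e) (f α) (f β) (f γ) := by
  have h2 : (2 : R') = f 2 := (map_ofNat f 2).symm
  simp only [HasTangents, inscribedConic, inscribedConicPolar, f.surjective.forall, h2,
    ← map_mul, ← map_sub, ← map_add, map_eq_zero_iff f f.injective, ne_eq] at h ⊢
  exact h

theorem exists_hasTangents {F : Type*} [Field F] [Fintype F] (hF : Fintype.card F = 5)
    {b c d e : F} (h : IsNormalizedArc b c d e) : ∃ α β γ : F, HasTangents b c d e α β γ := by
  have f : ZMod 5 ≃+* F := ZMod.ringEquivOfPrime F (by norm_num) hF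
  obtain ⟨α, β, γ, hc⟩ := exists_hasTangents_zmod _ _ _ _ (h.map f.symm)
  refine ⟨f α, f β, f γ, ?_⟩
  simpa using hc.map f

end ConicCoordinates

section Conic

open Module QuadraticMap

variable {F : Type*} [Field F]

theorem exists_conic_of_normalized_arc [Fintype F] (hF : Fintype.card F = 5)
    {φ : Fin 6 → Dual F (Fin 3 → F)}
    (hφ : ∀ i j k, i ≠ j → i ≠ k → j ≠ k → ∀ x, φ i x = 0 → φ j x = 0 → φ k x = 0 → x = 0)
    {b c d e : F} (h3 : ∀ x, φ 3 x = φ 0 x + φ 1 x + φ 2 x)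
    (h4 : ∀ x, φ 4 x = φ 0 x + b * φ 1 x + c * φ 2 x)
    (h5 : ∀ x, φ 5 x = φ 0 x + d * φ 1 x + e * φ 2 x)
    (hsurj : ∀ p q r, ∃ x, φ 0 x = p ∧ φ 1 x = q ∧ φ 2 x = r) :
    ∃ Q : QuadraticForm F (Fin 3 → F), NondegQF Q ∧
      ∀ x, (∀ v, v ≠ 0 → Q v = 0 → polar Q v x ≠ 0) ↔ ∀ i, φ i x ≠ 0 := by
  have hzero : ∀ x, x = 0 ↔ φ 0 x = 0 ∧ φ 1 x = 0 ∧ φ 2 x = 0 := fun x =>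
    ⟨by rintro rfl; simp, fun h => hφ 0 1 2 (by decide) (by decide) (by decide) x h.1 h.2.1 h.2.2⟩
  have hN : ∀ i j k, i ≠ j → i ≠ k → j ≠ k → ∀ p q r : F,
      let ℓ : Fin 6 → F := ![p, q, r, p + q + r, p + b * q + c * r, p + d * q + e * r]
      ℓ i = 0 → ℓ j = 0 → ℓ k = 0 → p = 0 ∧ q = 0 ∧ r = 0 := by
    intro i j k hij hik hjk p q r ℓ hi hj hk
    obtain ⟨x, rfl, rfl, rfl⟩ := hsurj p q r
    have hℓ : ∀ i, φ i x = ℓ i := by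
      intro i
      fin_cases i <;> simp [ℓ, h3, h4, h5]
    rw [← hℓ] at hi hj hk
    exact (hzero x).1 (hφ i j k hij hik hjk x hi hj hk)
  have hc : c ≠ 0 := fun h => by
    simpa [h] using hN 0 1 4 (by decide) (by decide) (by decide) 0 0 1
  have hb : b ≠ 1 := fun h => by
    simpa [h] using hN 2 3 4 (by decide) (by decide) (by decide) 1 (-1) 0
  have harc : IsNormalizedArc b c d e := by
    refine ⟨⟨?_, hc, ?_, ?_⟩, ⟨hb, ?_, ?_⟩, ⟨?_, ?_, ?_⟩, ?_, ?_, ?_, ?_⟩ <;> intro h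
    · simpa [h] using hN 0 2 4 (by decide) (by decide) (by decide) 0 1 0
    · simpa [h] using hN 0 2 5 (by decide) (by decide) (by decide) 0 1 0
    · simpa [h] using hN 0 1 5 (by decide) (by decide) (by decide) 0 0 1
    · simpa [h] using hN 1 3 4 (by decide) (by decide) (by decide) 1 0 (-1)
    · simpa [h] using hN 0 3 4 (by decide) (by decide) (by decide) 0 1 (-1)
    · simpa [h] using hN 2 3 5 (by decide) (by decide) (by decide) 1 (-1) 0
    · simpa [h] using hN 1 3 5 (by decide) (by decide) (by decide) 1 0 (-1)
    · simpa [h] using hN 0 3 5 (by decide) (by decide) (by decide) 0 1 (-1)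
    · have := hN 2 4 5 (by decide) (by decide) (by decide) d (-1) 0
      simp [h] at this
    · have := hN 1 4 5 (by decide) (by decide) (by decide) e 0 (-1)
      simp [h] at this
    · exact hc (hN 0 4 5 (by decide) (by decide) (by decide) 0 c (-b) rfl
        (show 0 + b * c + c * -b = 0 by ring)
        (show 0 + d * c + e * -b = 0 by linear_combination h)).2.1
    · exact hb (sub_eq_zero.1 (hN 3 4 5 (by decide) (by decide) (by decide) (c - b) (1 - c) (b - 1)
        (show (c - b) + (1 - c) + (b - 1) = 0 by ring)
        (show (c - b) + b * (1 - c) + c * (b - 1) = 0 by ring)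
        (show (c - b) + d * (1 - c) + e * (b - 1) = 0 by linear_combination h)).2.2)
  obtain ⟨α, β, γ, hnd, htan⟩ := exists_hasTangents hF harc
  let f : Dual F (Fin 3 → F) := α • φ 0
  let g : Dual F (Fin 3 → F) := β • φ 1
  let h : Dual F (Fin 3 → F) := γ • φ 2
  let Q : QuadraticForm F (Fin 3 → F) := linMulLin f f + linMulLin g g + linMulLin h h
    - (2 : F) • (linMulLin f g + linMulLin g h + linMulLin f h)
  have hQ : ∀ v, Q v = inscribedConic α β γ (φ 0 v) (φ 1 v) (φ 2 v) := fun v => by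
    simp only [Q, inscribedConic, f, g, h, sub_apply, add_apply, smul_apply, linMulLin_apply,
      LinearMap.smul_apply, smul_eq_mul]
  have hpolar : ∀ v x, polar Q v x = inscribedConicPolar α β γ (φ 0 v) (φ 1 v) (φ 2 v)
      (φ 0 x) (φ 1 x) (φ 2 x) := fun v x => by
    simp only [polar, hQ, inscribedConic, inscribedConicPolar, map_add]
    ring
  refine ⟨Q, fun v hv => ?_, fun x => ?_⟩
  · rw [hzero]
    refine hnd _ _ _ fun p q r => ?_
    obtain ⟨x, rfl, rfl, rfl⟩ := hsurj p q r
    rw [← hpolar]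
    exact hv x
  · have h1 : (∀ i, φ i x ≠ 0) ↔ (φ 0 x ≠ 0 ∧ φ 1 x ≠ 0 ∧ φ 2 x ≠ 0 ∧ φ 3 x ≠ 0 ∧ φ 4 x ≠ 0 ∧
        φ 5 x ≠ 0) := by
      simp [Fin.forall_fin_succ]
    rw [h1, h3, h4, h5, ← htan]
    constructor
    · intro hx p q r hne h0
      obtain ⟨v, rfl, rfl, rfl⟩ := hsurj p q r
      rw [← hpolar]
      exact hx v (by rwa [Ne, hzero]) (by rwa [hQ])
    · intro hx v hv h0
      rw [hpolar]
      exact hx _ _ _ (by rwa [← hzero]) (by rwa [← hQ])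

theorem exists_conic_of_arc [Fintype F] (hF : Fintype.card F = 5)
    {φ : Fin 6 → Dual F (Fin 3 → F)}
    (hφ : ∀ i j k, i ≠ j → i ≠ k → j ≠ k → ∀ x, φ i x = 0 → φ j x = 0 → φ k x = 0 → x = 0) :
    ∃ Q : QuadraticForm F (Fin 3 → F), NondegQF Q ∧
      ∀ x, (∀ v, v ≠ 0 → Q v = 0 → polar Q v x ≠ 0) ↔ ∀ i, φ i x ≠ 0 := by
  let B : (Fin 3 → F) →ₗ[F] (Fin 3 → F) := LinearMap.pi ![φ 0, φ 1, φ 2]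
  have hBinj : Function.Injective B := by
    rw [injective_iff_map_eq_zero]
    intro x hx
    exact hφ 0 1 2 (by decide) (by decide) (by decide) x (congrFun hx 0) (congrFun hx 1)
      (congrFun hx 2)
  have hsurj : ∀ p q r, ∃ x, φ 0 x = p ∧ φ 1 x = q ∧ φ 2 x = r := fun p q r => by
    obtain ⟨x, hx⟩ := LinearMap.injective_iff_surjective.1 hBinj ![p, q, r]
    exact ⟨x, congrFun hx 0, congrFun hx 1, congrFun hx 2⟩
  have hcomb : ∀ i, i ≠ 0 → i ≠ 1 → i ≠ 2 → ∃ a b c, a ≠ 0 ∧ b ≠ 0 ∧ c ≠ 0 ∧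
      ∀ x, φ i x = a * φ 0 x + b * φ 1 x + c * φ 2 x := by
    intro i hi0 hi1 hi2
    obtain ⟨x0, h00, h01, h02⟩ := hsurj 1 0 0
    obtain ⟨x1, h10, h11, h12⟩ := hsurj 0 1 0
    obtain ⟨x2, h20, h21, h22⟩ := hsurj 0 0 1
    refine ⟨φ i x0, φ i x1, φ i x2, fun h => ?_, fun h => ?_, fun h => ?_, fun x => ?_⟩
    · have := hφ i 1 2 hi1 hi2 (by decide) x0 h h01 h02
      simp [this] at h00
    · have := hφ i 0 2 hi0 hi2 (by decide) x1 h h10 h12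
      simp [this] at h11
    · have := hφ i 0 1 hi0 hi1 (by decide) x2 h h20 h21
      simp [this] at h22
    · have : x = φ 0 x • x0 + φ 1 x • x1 + φ 2 x • x2 := by
        rw [← sub_eq_zero]
        apply hφ 0 1 2 (by decide) (by decide) (by decide) <;> simp [*]
      conv_lhs => rw [this]
      simp only [map_add, map_smul, smul_eq_mul]
      ring
  obtain ⟨a, b, c, ha, hb, hc, h3⟩ := hcomb 3 (by decide) (by decide) (by decide)
  obtain ⟨p, q, r, hp, hq, hr, h4⟩ := hcomb 4 (by decide) (by decide) (by decide)
  obtain ⟨s, t, u, hs, ht, hu, h5⟩ := hcomb 5 (by decide) (by decide) (by decide)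
  let k : Fin 6 → F := ![a, b, c, 1, a / p, a / s]
  have hk : ∀ i, k i ≠ 0 := by
    intro i
    fin_cases i <;> simp [k, *]
  obtain ⟨Q, hQ, hQφ⟩ := exists_conic_of_normalized_arc hF (φ := fun i => k i • φ i)
    (b := a * q / (p * b)) (c := a * r / (p * c)) (d := a * t / (s * b)) (e := a * u / (s * c))
    (fun i j l hij hil hjl x h1 h2 h3 => hφ i j l hij hil hjl x
      (by simpa [hk] using h1) (by simpa [hk] using h2) (by simpa [hk] using h3))
    (fun x => by simp [k, h3])
    (fun x => by simp [k, h4]; field_simp)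
    (fun x => by simp [k, h5]; field_simp)
    (fun x y z => by
      obtain ⟨v, h1, h2, h3⟩ := hsurj (a⁻¹ * x) (b⁻¹ * y) (c⁻¹ * z)
      exact ⟨v, by simp [k, *]⟩)
  exact ⟨Q, hQ, fun x => (hQφ x).trans (forall_congr' fun i => by simp [hk])⟩

end Conic

section InteriorPoints

open Module QuadraticMap

variable {F : Type*} [Field F]

theorem mk_mem_pointsOn {L : Submodule F (Fin 3 → F)} {v : Fin 3 → F} (hv : v ≠ 0) :
    Projectivization.mk F v hv ∈ pointsOn L ↔ v ∈ L := by
  rw [pointsOn, Set.mem_ofPred_eq, Projectivization.submodule_mk, Submodule.span_singleton_le_iff_mem]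

theorem mk_mem_conicSet {Q : QuadraticForm F (Fin 3 → F)} {v : Fin 3 → F} (hv : v ≠ 0) :
    Projectivization.mk F v hv ∈ conicSet Q ↔ Q v = 0 := by
  rw [conicSet, Set.mem_ofPred_eq, Projectivization.submodule_mk]
  refine ⟨fun h => h v (Submodule.mem_span_singleton_self v), fun h w hw => ?_⟩
  obtain ⟨a, rfl⟩ := Submodule.mem_span_singleton.1 hw
  rw [QuadraticMap.map_smul, h, smul_zero]

theorem finrank_ker_of_ne_zero {f : Dual F (Fin 3 → F)} (hf : f ≠ 0) :
    finrank F (LinearMap.ker f) = 2 := by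
  have := Module.Dual.finrank_ker_add_one_of_ne_zero hf
  rw [finrank_fin_fun] at this
  omega

theorem NondegQF.polarBilin_ne_zero {Q : QuadraticForm F (Fin 3 → F)} (hQ : NondegQF Q)
    {v : Fin 3 → F} (hv : v ≠ 0) : polarBilin Q v ≠ 0 := fun h =>
  hv (hQ v fun w => by rw [← polarBilin_apply_apply, h, LinearMap.zero_apply])

theorem NondegQF.isTangentLine_ker {Q : QuadraticForm F (Fin 3 → F)} (hQ : NondegQF Q)
    {v : Fin 3 → F} (hv : v ≠ 0) (h0 : Q v = 0) :
    IsTangentLine (conicSet Q) (LinearMap.ker (polarBilin Q v)) := by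
  refine ⟨finrank_ker_of_ne_zero (hQ.polarBilin_ne_zero hv), Projectivization.mk F v hv,
    ⟨(mk_mem_conicSet hv).2 h0, ?_⟩, ?_⟩
  · simp [mk_mem_pointsOn, h0]
  · intro P hP
    induction P using Projectivization.ind with | h w hw => ?_
    obtain ⟨hwQ, hwL⟩ := hP
    rw [mk_mem_conicSet] at hwQ
    simp only [mk_mem_pointsOn, LinearMap.mem_ker, polarBilin_apply_apply] at hwL
    by_contra hne
    have hind : LinearIndependent F ![v, w] := by
      rw [LinearIndependent.pair_iff' hv]
      exact fun a ha => hne ((Projectivization.mk_eq_mk_iff' F w v hw hv).2 ⟨a, ha⟩)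
    have hspan : Submodule.span F (Set.range ![v, w]) = LinearMap.ker (polarBilin Q v) := by
      apply Submodule.eq_of_le_of_finrank_eq
      · rw [Submodule.span_le]
        rintro _ ⟨i, rfl⟩
        fin_cases i <;> simp [hwL, h0]
      · rw [finrank_span_eq_card hind, finrank_ker_of_ne_zero (hQ.polarBilin_ne_zero hv),
          Fintype.card_fin]
    have hker : LinearMap.ker (polarBilin Q v) ≤ LinearMap.ker (polarBilin Q w) := by
      rw [← hspan, Submodule.span_le]
      rintro _ ⟨i, rfl⟩
      fin_cases i
      · simpa [polar_comm Q w v] using hwL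
      · simp [hwQ]
    obtain ⟨a, ha⟩ : ∃ a : F, polarBilin Q w = a • polarBilin Q v := by
      have := mem_span_of_iInf_ker_le_ker (L := fun _ : Unit => polarBilin Q v) (by simpa using hker)
      rw [Set.range_const, Submodule.mem_span_singleton] at this
      obtain ⟨a, ha⟩ := this
      exact ⟨a, ha.symm⟩
    have hwv : w - a • v = 0 := hQ _ fun x => by
      rw [← polarBilin_apply_apply, map_sub, map_smul, ha, sub_self, LinearMap.zero_apply]
    exact hne ((Projectivization.mk_eq_mk_iff' F w v hw hv).2 ⟨a, (sub_eq_zero.1 hwv).symm⟩)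

theorem le_ker_polarBilin_of_isTangentLine {Q : QuadraticForm F (Fin 3 → F)}
    {L : Submodule F (Fin 3 → F)} (hL : ∃! P : PGPoint F, P ∈ conicSet Q ∩ pointsOn L) :
    ∃ v, v ≠ 0 ∧ Q v = 0 ∧ ∀ y ∈ L, polar Q v y = 0 := by
  obtain ⟨P, ⟨hPC, hPL⟩, hPu⟩ := hL
  induction P using Projectivization.ind with | h v hv => ?_
  rw [mk_mem_conicSet] at hPC
  rw [mk_mem_pointsOn] at hPL
  refine ⟨v, hv, hPC, fun y hy => ?_⟩
  by_contra hvy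
  set t : F := -Q y / polar Q v y with ht
  have hQ0 : Q (y + t • v) = 0 := by
    have h1 : Q (y + t • v) = Q y + Q (t • v) + polar Q y (t • v) := by rw [polar]; ring
    rw [h1, QuadraticMap.map_smul, hPC, polar_smul_right, polar_comm Q y v, ht]
    simp only [smul_eq_mul, mul_zero, add_zero]
    field_simp
    ring
  have hcol : ∀ a : F, y + t • v ≠ a • v := by
    intro a ha
    apply hvy
    rw [show y = (a - t) • v by rw [sub_smul, ← ha, add_sub_cancel_right], polar_smul_right,
      polar_self, hPC, smul_zero, smul_zero]
  have hne : y + t • v ≠ 0 := by simpa using hcol 0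
  have := hPu (Projectivization.mk F _ hne) ⟨(mk_mem_conicSet hne).2 hQ0,
    (mk_mem_pointsOn hne).2 (L.add_mem hy (L.smul_mem t hPL))⟩
  rw [Projectivization.mk_eq_mk_iff'] at this
  obtain ⟨a, ha⟩ := this
  exact hcol a ha.symm

theorem NondegQF.isInteriorPoint_iff {Q : QuadraticForm F (Fin 3 → F)} (hQ : NondegQF Q)
    {x : Fin 3 → F} (hx : x ≠ 0) :
    IsInteriorPoint (conicSet Q) (Projectivization.mk F x hx) ↔
      ∀ v, v ≠ 0 → Q v = 0 → polar Q v x ≠ 0 := by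
  rw [IsInteriorPoint, IsExteriorPoint]
  constructor
  · rintro ⟨h1, h2⟩ v hv h0 hvx
    exact h2 ⟨h1, _, hQ.isTangentLine_ker hv h0, (mk_mem_pointsOn hx).2 (by simpa using hvx)⟩
  · intro h
    refine ⟨fun hC => ?_, ?_⟩
    · rw [mk_mem_conicSet] at hC
      exact h x hx hC (by rw [polar_self, hC, smul_zero])
    · rintro ⟨-, L, hL, hxL⟩
      obtain ⟨v, hv, h0, hvL⟩ := le_ker_polarBilin_of_isTangentLine hL.2
      exact h v hv h0 (hvL x ((mk_mem_pointsOn hx).1 hxL))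

end InteriorPoints

section ProjectiveLines

open Module Configuration Configuration.ProjectivePlane
open scoped Classical

variable {F : Type*} [Field F]

/-- The line with the given homogeneous coordinates. -/
noncomputable def lineSubmodule (l : PGPoint F) : Submodule F (Fin 3 → F) :=
  LinearMap.ker (dotProductEquiv F (Fin 3) l.rep)

theorem isProjLine_lineSubmodule (l : PGPoint F) : IsProjLine F (lineSubmodule l) :=
  finrank_ker_of_ne_zero (by simpa using l.rep_nonzero)

theorem mem_pointsOn_lineSubmodule {p l : PGPoint F} : p ∈ pointsOn (lineSubmodule l) ↔ p ∈ l := by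
  rw [ofField.mem_iff]
  induction p using Projectivization.ind with | h v hv => ?_
  rw [mk_mem_pointsOn, ← l.mk_rep, Projectivization.orthogonal_mk, l.mk_rep, dotProduct_comm]
  simp [lineSubmodule]

theorem mk_mem_iff_dotProduct {v : Fin 3 → F} (hv : v ≠ 0) (l : PGPoint F) :
    Projectivization.mk F v hv ∈ l ↔ l.rep ⬝ᵥ v = 0 := by
  rw [← mem_pointsOn_lineSubmodule, mk_mem_pointsOn]
  simp [lineSubmodule]

theorem order_pgPoint [Fintype F] (hF : Fintype.card F = 5) :
    order (PGPoint F) (PGPoint F) = 5 := by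
  have := Fintype.ofFinite (PGPoint F)
  have h1 := card_points (PGPoint F) (PGPoint F)
  have h2 := Projectivization.card' F (Fin 3 → F)
  have h3 : Nat.card F = 5 := by rw [Nat.card_eq_fintype_card, hF]
  rw [Nat.card_fun, h3, Nat.card_eq_fintype_card (α := Fin 3), Fintype.card_fin,
    Nat.card_eq_fintype_card (α := PGPoint F), h1] at h2
  nlinarith

end ProjectiveLines

/-- a set without tangents of size 10 in `PG(2,5)` is either the
trivial one or the set of interior points of an irreducible conic. -/
theorem stmt_11 [Fintype F] (hcard : Fintype.card F = 5)
    (S : Set (PGPoint F)) (hS : NoTangents S) (hsize : S.ncard = 10) :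
    IsTrivialSWT S ∨
      ∃ Q : QuadraticForm F (Fin 3 → F), NondegQF Q ∧
        S = {P : PGPoint F | IsInteriorPoint (conicSet Q) P} := by
  classical
  have := Fintype.ofFinite (PGPoint F)
  lift S to Finset (PGPoint F) using S.toFinite
  rw [Set.ncard_coe_finset] at hsize
  have ho := order_pgPoint hcard
  have hS1 : ∀ l : PGPoint F, secantCard S l ≠ 1 := by
    intro l hl
    obtain ⟨p, hp⟩ := Finset.card_eq_one.1 hl
    refine hS (lineSubmodule l) (isProjLine_lineSubmodule l) ⟨p, ?_, fun q hq => ?_⟩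
    · have : p ∈ ({p ∈ S | p ∈ l} : Finset _) := by simp [hp]
      simpa [mem_pointsOn_lineSubmodule] using this
    · have : q ∈ ({p ∈ S | p ∈ l} : Finset _) := by
        simpa [mem_pointsOn_lineSubmodule] using hq
      simpa [hp] using this
  by_cases h5 : ∃ l : PGPoint F, 5 ≤ secantCard S l
  · obtain ⟨l, hl⟩ := h5
    obtain ⟨m, hlm, h⟩ := eq_xor_of_five_le_secantCard hS1 hsize ho hl
    refine .inl ⟨lineSubmodule l, lineSubmodule m, isProjLine_lineSubmodule l,
      isProjLine_lineSubmodule m, fun hEq => ?_, ?_⟩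
    · have hempty : S = ∅ := Finset.eq_empty_of_forall_notMem fun p hp => by
        have := (h p).1 hp
        simp only [← mem_pointsOn_lineSubmodule, hEq] at this
        tauto
      simp [hempty] at hsize
    · ext p
      simpa [mem_pointsOn_lineSubmodule] using h p
  push Not at h5
  have hle4 : ∀ l : PGPoint F, secantCard S l ≤ 4 := fun l => Nat.le_of_lt_succ (h5 l)
  have hle : ∀ l : PGPoint F, secantCard S l ≤ 3 := fun l =>
    Nat.le_of_lt_succ (lt_of_le_of_ne (hle4 l) (secantCard_ne_four hS1 hsize ho hle4 l))
  have hE := card_external hS1 hsize ho hle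
  have hpencil := fun p (hp : p ∉ S) => card_external_pencil hS1 hsize ho hle hp
  let u := (Finset.equivFinOfCardEq hE).symm
  have hu : ∀ i, ∀ p ∈ S, p ∉ (u i).1 := fun i p hp hpl => by
    have h1 := (u i).2
    have h2 := two_le_secantCard hS1 hp hpl
    simp only [Finset.mem_filter_univ] at h1
    omega
  have hS_iff : ∀ p, p ∈ S ↔ ∀ i, p ∉ (u i).1 := by
    refine fun p => ⟨fun hp i => hu i p hp, fun h => ?_⟩
    by_contra hp
    obtain ⟨l, hl⟩ := Finset.card_pos.1 (show 0 < Finset.card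
      {l ∈ ({l : PGPoint F | p ∈ l} : Finset _) | secantCard S l = 0} by
        have := hpencil p hp; omega)
    simp only [Finset.mem_filter, Finset.mem_univ, true_and] at hl
    refine h ((Finset.equivFinOfCardEq hE) ⟨l, by simpa using hl.2⟩) ?_
    simpa [u] using hl.1
  obtain ⟨Q, hQ, hQu⟩ := exists_conic_of_arc hcard
    (φ := fun i => dotProductEquiv F (Fin 3) (u i).1.rep) (by
      intro i j k hij hik hjk x hi hj hk
      by_contra hx
      have hmem : ∀ i, dotProductEquiv F (Fin 3) (u i).1.rep x = 0 →
          Projectivization.mk F x hx ∈ (u i).1 := fun i hi => by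
        rw [mk_mem_iff_dotProduct]
        simpa using hi
      have hp : Projectivization.mk F x hx ∉ S := fun h => hu i _ h (hmem i hi)
      have h3 : ({(u i).1, (u j).1, (u k).1} : Finset (PGPoint F)).card = 3 :=
        Finset.card_eq_three.2 ⟨_, _, _, by simpa [Subtype.val_inj] using hij,
          by simpa [Subtype.val_inj] using hik, by simpa [Subtype.val_inj] using hjk, rfl⟩
      have hsub := Finset.card_le_card (show ({(u i).1, (u j).1, (u k).1} : Finset (PGPoint F)) ⊆
          {l ∈ ({l : PGPoint F | Projectivization.mk F x hx ∈ l} : Finset _) |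
            secantCard S l = 0} by
        intro l hl
        simp only [Finset.mem_insert, Finset.mem_singleton] at hl
        simp only [Finset.mem_filter, Finset.mem_univ, true_and]
        have h0 : ∀ i, secantCard S (u i).1 = 0 := fun i =>
          (Finset.mem_filter.1 (u i).2).2
        rcases hl with rfl | rfl | rfl
        · exact ⟨hmem i hi, h0 i⟩
        · exact ⟨hmem j hj, h0 j⟩
        · exact ⟨hmem k hk, h0 k⟩)
      have := hpencil _ hp
      omega)
  refine .inr ⟨Q, hQ, ?_⟩
  ext p
  induction p using Projectivization.ind with | h x hx => ?_
  rw [Finset.mem_coe, hS_iff, Set.mem_ofPred_eq, hQ.isInteriorPoint_iff hx, hQu]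
  refine forall_congr' fun i => not_congr ?_
  rw [mk_mem_iff_dotProduct]
  simp
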